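/- (Sufficiency direction of the Berestycki–Varadhan maximum principle.) Let Ω ⊂ ℝⁿ be a bounded domain and let L be the uniformly elliptic operator Lu = Σ_{i,j} a_{ij}(x) ∂²u/∂x_i∂x_j + Σ_i b_i(x) ∂u/∂x_i + c(x)u with a_{ij} = a_{ji} continuous on the closure of Ω, b_i, c ∈ L^∞(Ω), and Σ a_{ij} ξ_i ξ_j ≥ λ|ξ|² for some λ > 0. Suppose the first eigenvalue of L in Ω is positive in the following sense: there exist μ > 0 and a function ψ ∈ C²(Ω) ∩ C(closure of Ω) with ψ > 0 in Ω such that (L + μ)ψ ≤ 0 in Ω. Then the maximum principle holds in Ω: every w ∈ C²(Ω) ∩ C(closure of Ω) with Lw ≥ 0 in Ω and w ≤ 0 on ∂Ω satisfies w ≤ 0 in Ω. -/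

import Mathlib

open MeasureTheory Set

noncomputable def pd {m : ℕ} (u : EuclideanSpace ℝ (Fin m) → ℝ) (i : Fin m)
    (x : EuclideanSpace ℝ (Fin m)) : ℝ :=
  fderiv ℝ u x (EuclideanSpace.single i 1)

/-!
A strict supersolution `ψ` rules out an interior touching point: if `w - t * ψ ≤ 0` with equality
at `x ∈ Ω` and `0 < t`, then `L (w - t * ψ) x ≤ 0` because `x` is a local maximum with value `0`,
whereas `L (w - t * ψ) x ≥ -t * L ψ x > 0`. The quotient `w / ψ` need not attain its supremum in
`Ω`, since `ψ` may vanish at the boundary. Its maximum `t` over a compact `K ⊆ Ω` is attained, and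
when `Ω \ K` has small measure, the maximum principle there carries `w - t * ψ ≤ 0` from
`K ∪ ∂Ω` to all of `Ω`.

The maximum principle on sets of small measure is the Alexandrov–Bakelman–Pucci argument. If `u`
has a positive interior maximum `M` and `d` bounds the diameter, every slope of norm less than
`M / d` is the gradient of `u` at a point of the upper contact set. There the Hessian is negative
semidefinite, and `0 ≤ L u` bounds its determinant by a multiple of `(M / d) ^ n`. By the area
formula, the image of the gradient cannot cover the ball of radius `M / d` if the measure is small.
-/

open scoped Topology Gradient Matrix RealInnerProductSpace

section Semicontinuity

variable {X : Type*} [TopologicalSpace X] {s : Set X} {f g : X → ℝ}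

theorem upperSemicontinuousOn_sub_const_mul (hf : UpperSemicontinuousOn f s)
    (hg : LowerSemicontinuousOn g s) {t : ℝ} (ht : 0 ≤ t) :
    UpperSemicontinuousOn (fun x => f x - t * g x) s := by
  have hanti : Antitone fun r : ℝ => -(t * r) := fun _ _ h =>
    neg_le_neg (mul_le_mul_of_nonneg_left h ht)
  have hcont : Continuous fun r : ℝ => -(t * r) := by fun_prop
  simp only [sub_eq_add_neg]
  exact hf.add (hcont.comp_lowerSemicontinuousOn_antitone hg hanti)

theorem lowerSemicontinuous_indicator_of_continuousOn (hs : IsOpen s) (hf : ContinuousOn f s)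
    (hnonneg : ∀ x ∈ s, 0 ≤ f x) :
    LowerSemicontinuous (s.indicator f) := by
  intro x y hy
  by_cases hx : x ∈ s
  · rw [indicator_of_mem hx] at hy
    filter_upwards [(hf.continuousAt (hs.mem_nhds hx)).eventually (lt_mem_nhds hy),
      hs.mem_nhds hx] with z hz hzs
    rwa [indicator_of_mem hzs]
  · rw [indicator_of_notMem hx] at hy
    exact Filter.Eventually.of_forall fun z => hy.trans_le (indicator_nonneg hnonneg z)

end Semicontinuity

section SecondDerivativeTest

theorem deriv_deriv_nonpos_of_isLocalMax {f : ℝ → ℝ} {t : ℝ} (hmax : IsLocalMax f t)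
    (hf : ContinuousAt f t) : deriv (deriv f) t ≤ 0 := by
  by_contra! hpos
  have hmin : IsLocalMin f t := isLocalMin_of_deriv_deriv_pos hpos hmax.deriv_eq_zero hf
  have hconst : f =ᶠ[𝓝 t] fun _ => f t := by
    filter_upwards [hmax, hmin] with s hs hs' using le_antisymm hs hs'
  exact hpos.ne' (by rw [hconst.deriv.deriv_eq]; simp)

variable {E : Type*} [NormedAddCommGroup E] [NormedSpace ℝ E] {u : E → ℝ} {x : E}

theorem fderiv_eq_of_eventually_le_affine {ℓ : E →L[ℝ] ℝ} (hu : DifferentiableAt ℝ u x)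
    (hle : ∀ᶠ y in 𝓝 x, u y ≤ u x + ℓ (y - x)) : fderiv ℝ u x = ℓ := by
  have hmax : IsLocalMax (fun y => u y - ℓ y) x := by
    filter_upwards [hle] with y hy
    rw [map_sub] at hy
    linarith
  have h := hmax.fderiv_eq_zero
  rwa [fderiv_fun_sub hu ℓ.differentiableAt, ContinuousLinearMap.fderiv, sub_eq_zero] at h

theorem differentiableAt_fderiv_of_contDiffAt_two (hu : ContDiffAt ℝ 2 u x) :
    DifferentiableAt ℝ (fderiv ℝ u) x :=
  (hu.fderiv_right (m := 1) (by norm_num)).differentiableAt one_ne_zero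

theorem fderiv_fderiv_apply_self_nonpos_of_eventually_le_affine {ℓ : E →L[ℝ] ℝ}
    (hu : ContDiffAt ℝ 2 u x) (hle : ∀ᶠ y in 𝓝 x, u y ≤ u x + ℓ (y - x)) (v : E) :
    fderiv ℝ (fderiv ℝ u) x v v ≤ 0 := by
  set γ : ℝ → E := fun t => x + t • v
  have hγ0 : γ 0 = x := by simp [γ]
  have hγ : ∀ t, HasDerivAt γ v t := fun t => by
    have h := ((hasDerivAt_id t).smul_const v).const_add x
    rwa [one_smul] at h
  have hγx : Filter.Tendsto γ (𝓝 0) (𝓝 x) := by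
    simpa [hγ0] using (hγ 0).continuousAt.tendsto
  set f : ℝ → ℝ := fun t => u (γ t) - t * ℓ v
  have hderiv : ∀ᶠ t in 𝓝 0, HasDerivAt f (fderiv ℝ u (γ t) v - ℓ v) t := by
    filter_upwards [hγx.eventually (hu.eventually (by simp))] with t ht
    have h := (ht.differentiableAt two_ne_zero).hasFDerivAt.comp_hasDerivAt t (hγ t)
    have h' := h.sub ((hasDerivAt_id t).mul_const (ℓ v))
    rwa [one_mul] at h'
  have hmax : IsLocalMax f 0 := by
    filter_upwards [hγx.eventually hle] with t ht
    simp only [γ, add_sub_cancel_left, map_smul, smul_eq_mul] at ht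
    simp only [f, γ, zero_smul, add_zero, zero_mul, sub_zero]
    linarith
  have hderiv₂ : deriv (deriv f) 0 = fderiv ℝ (fderiv ℝ u) x v v := by
    have h : HasFDerivAt (fderiv ℝ u) (fderiv ℝ (fderiv ℝ u) x) (γ 0) := by
      rw [hγ0]
      exact (differentiableAt_fderiv_of_contDiffAt_two hu).hasFDerivAt
    have h' := ((h.comp_hasDerivAt 0 (hγ 0)).clm_apply (hasDerivAt_const 0 v)).sub_const (ℓ v)
    rw [Filter.EventuallyEq.deriv_eq (hderiv.mono fun t ht => ht.deriv)]
    simpa using h'.deriv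
  rw [← hderiv₂]
  exact deriv_deriv_nonpos_of_isLocalMax hmax hderiv.self_of_nhds.continuousAt

end SecondDerivativeTest

section UpperContactSet

/-- The upper contact set of `u` in `Q`: the points of `Q` at which the graph of `u` over `Q` lies
below its tangent plane. Slopes are taken to be derivatives, so the notion is meaningful only at
points of differentiability. -/
def upperContactSet {E : Type*} [NormedAddCommGroup E] [NormedSpace ℝ E] (u : E → ℝ) (Q : Set E) :
    Set E :=
  {x ∈ Q | ∀ y ∈ Q, u y ≤ u x + fderiv ℝ u x (y - x)}

variable {E : Type*} [NormedAddCommGroup E] [InnerProductSpace ℝ E] [CompleteSpace E]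

theorem ball_subset_gradient_image_upperContactSet {Q U : Set E} (hQ : IsCompact Q)
    (hU : IsOpen U) (hUQ : U ⊆ Q) {d : ℝ} (hd : 0 < d) (hdiam : ∀ x ∈ Q, ∀ y ∈ Q, dist x y ≤ d)
    {u : E → ℝ} (huQ : UpperSemicontinuousOn u Q) (huU : ∀ x ∈ U, DifferentiableAt ℝ u x)
    (hbd : ∀ x ∈ Q \ U, u x ≤ 0) {x₀ : E} (hx₀ : x₀ ∈ Q) :
    Metric.ball 0 (u x₀ / d) ⊆
      ∇ u '' {x ∈ U | x ∈ upperContactSet u Q ∧ 0 < u x ∧ ‖∇ u x‖ < u x₀ / d} := by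
  intro p hp
  rw [mem_ball_zero_iff] at hp
  obtain ⟨x, hxQ, hxmax⟩ := UpperSemicontinuousOn.exists_isMaxOn ⟨x₀, hx₀⟩ hQ
    (huQ.add (innerSL ℝ p).continuous.neg.continuousOn.upperSemicontinuousOn)
  have hle : ∀ y ∈ Q, u y ≤ u x + innerSL ℝ p (y - x) := fun y hy => by
    have h : u y + -innerSL ℝ p y ≤ u x + -innerSL ℝ p x := hxmax hy
    rw [map_sub]
    linarith
  have hux : 0 < u x := by
    have hslope : ⟪p, x₀ - x⟫ ≤ ‖p‖ * d := (real_inner_le_norm _ _).trans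
      (mul_le_mul_of_nonneg_left (by simpa [dist_eq_norm] using hdiam x₀ hx₀ x hxQ)
        (norm_nonneg p))
    have h := hle x₀ hx₀
    rw [innerSL_apply_apply] at h
    linarith [(lt_div_iff₀ hd).1 hp]
  have hxU : x ∈ U := by
    by_contra hxU
    exact (hbd x ⟨hxQ, hxU⟩).not_gt hux
  have hfderiv : fderiv ℝ u x = innerSL ℝ p := fderiv_eq_of_eventually_le_affine (huU x hxU)
    (Filter.mem_of_superset (hU.mem_nhds hxU) fun y hy => hle y (hUQ hy))
  have hgrad : ∇ u x = p := ext_inner_right ℝ fun v => by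
    rw [inner_gradient_left, hfderiv, innerSL_apply_apply]
  exact ⟨x, ⟨hxU, ⟨hxQ, hfderiv ▸ hle⟩, hux, hgrad.symm ▸ hp⟩, hgrad⟩

end UpperContactSet

theorem addHaar_image_le_of_abs_det_fderiv_le {E : Type*} [NormedAddCommGroup E]
    [NormedSpace ℝ E] [FiniteDimensional ℝ E] [MeasurableSpace E] [BorelSpace E]
    (μ : Measure E) [μ.IsAddHaarMeasure] {f : E → E} {s t : Set E} (hs : MeasurableSet s)
    (hts : t ⊆ s) (hf : ∀ x ∈ s, DifferentiableAt ℝ f x) {κ : ℝ}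
    (hdet : ∀ x ∈ t, |(fderiv ℝ f x).det| ≤ κ) : μ (f '' t) ≤ ENNReal.ofReal κ * μ s := by
  have := FiniteDimensional.complete ℝ E
  set s' := s ∩ {x | |(fderiv ℝ f x).det| ≤ κ}
  have hs' : MeasurableSet s' := hs.inter <| measurableSet_le
    (ContinuousLinearMap.continuous_det.measurable.comp (measurable_fderiv ℝ f)).norm
    measurable_const
  calc μ (f '' t) ≤ μ (f '' s') := measure_mono (image_mono fun x hx => ⟨hts hx, hdet x hx⟩)
    _ ≤ ∫⁻ x in s', ENNReal.ofReal |(fderiv ℝ f x).det| ∂μ :=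
      addHaar_image_le_lintegral_abs_det_fderiv μ hs' fun x hx =>
        (hf x hx.1).hasFDerivAt.hasFDerivWithinAt
    _ ≤ ∫⁻ _ in s', ENNReal.ofReal κ ∂μ :=
      setLIntegral_mono measurable_const fun x hx => ENNReal.ofReal_le_ofReal hx.2
    _ = ENNReal.ofReal κ * μ s' := setLIntegral_const _ _
    _ ≤ ENNReal.ofReal κ * μ s := by gcongr; exact inter_subset_left

section PosSemidef

variable {ι : Type*} [Fintype ι] {P : Matrix ι ι ℝ}

theorem det_le_trace_pow_of_posSemidef [DecidableEq ι] (hP : P.PosSemidef) :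
    P.det ≤ P.trace ^ Fintype.card ι := by
  rw [hP.1.det_eq_prod_eigenvalues, hP.1.trace_eq_sum_eigenvalues]
  simp only [RCLike.ofReal_real_eq_id, id_eq]
  calc ∏ i, hP.1.eigenvalues i ≤ ∏ _i : ι, ∑ j, hP.1.eigenvalues j :=
        Finset.prod_le_prod (fun i _ => hP.eigenvalues_nonneg i) fun i _ =>
          Finset.single_le_sum (fun j _ => hP.eigenvalues_nonneg j) (Finset.mem_univ i)
    _ = (∑ j, hP.1.eigenvalues j) ^ Fintype.card ι := by
        rw [Finset.prod_const, Finset.card_univ]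

theorem abs_det_le_trace_neg_pow_of_posSemidef_neg [DecidableEq ι] (hP : (-P).PosSemidef) :
    |P.det| ≤ (-P).trace ^ Fintype.card ι := by
  have hdet : |P.det| = (-P).det := by
    rw [← abs_of_nonneg hP.det_nonneg, Matrix.det_neg, abs_mul, abs_neg_one_pow, one_mul]
  exact hdet.trans_le (det_le_trace_pow_of_posSemidef hP)

theorem mul_trace_le_sum_mul_of_posSemidef (hP : P.PosSemidef) {A : ι → ι → ℝ} {lam : ℝ}
    (hA : ∀ ξ : EuclideanSpace ℝ ι, lam * ‖ξ‖ ^ 2 ≤ ∑ i, ∑ j, A i j * ξ i * ξ j) :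
    lam * P.trace ≤ ∑ i, ∑ j, A i j * P i j := by
  classical
  obtain ⟨C, rfl⟩ : ∃ C : Matrix ι ι ℝ, P = Cᴴ * C := by
    open scoped MatrixOrder Matrix.Norms.L2Operator in
    exact CStarAlgebra.nonneg_iff_eq_star_mul_self.mp hP.nonneg
  have hentry : ∀ i j, (Cᴴ * C) i j = ∑ k, C k i * C k j := fun i j => by
    simp only [Matrix.mul_apply, Matrix.conjTranspose_apply, star_trivial]
  calc lam * (Cᴴ * C).trace
      = ∑ k, lam * ‖(WithLp.toLp 2 (C k) : EuclideanSpace ℝ ι)‖ ^ 2 := by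
        simp only [EuclideanSpace.norm_sq_eq, Matrix.trace, Matrix.diag, hentry,
          Real.norm_eq_abs, sq_abs, ← Finset.mul_sum]
        rw [Finset.sum_comm]
        simp only [sq]
    _ ≤ ∑ k, ∑ i, ∑ j, A i j * C k i * C k j := Finset.sum_le_sum fun k _ => hA _
    _ = ∑ i, ∑ j, ∑ k, A i j * C k i * C k j := by
        rw [Finset.sum_comm]
        exact Finset.sum_congr rfl fun i _ => Finset.sum_comm
    _ = ∑ i, ∑ j, A i j * (Cᴴ * C) i j := by
        simp only [hentry, Finset.mul_sum, mul_assoc]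

end PosSemidef

section Hessian

variable {E : Type*} [NormedAddCommGroup E] [InnerProductSpace ℝ E] [CompleteSpace E]

theorem differentiableAt_gradient {u : E → ℝ} {x : E} (hu : ContDiffAt ℝ 2 u x) :
    DifferentiableAt ℝ (∇ u) x :=
  (InnerProductSpace.toDual ℝ E).symm.toContinuousLinearEquiv.differentiableAt.comp x
    (differentiableAt_fderiv_of_contDiffAt_two hu)

theorem inner_fderiv_gradient (u : E → ℝ) (x v w : E) :
    ⟪fderiv ℝ (∇ u) x v, w⟫ = fderiv ℝ (fderiv ℝ u) x v w := by
  have h := (InnerProductSpace.toDual ℝ E).toContinuousLinearEquiv.comp_fderiv (f := ∇ u) (x := x)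
  change fderiv ℝ (InnerProductSpace.toDual ℝ E ∘ ∇ u) x = _ at h
  rw [toDual_comp_gradient] at h
  rw [h]
  rfl

variable {m : ℕ} {u v : EuclideanSpace ℝ (Fin m) → ℝ} {x : EuclideanSpace ℝ (Fin m)}

theorem pd_eq_gradient_apply (u : EuclideanSpace ℝ (Fin m) → ℝ) (i : Fin m)
    (x : EuclideanSpace ℝ (Fin m)) : pd u i x = ∇ u x i := by
  rw [pd, ← inner_gradient_left, EuclideanSpace.inner_single_right]
  simp

theorem differentiableAt_pd (hu : ContDiffAt ℝ 2 u x) (i : Fin m) :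
    DifferentiableAt ℝ (pd u i) x :=
  (differentiableAt_fderiv_of_contDiffAt_two hu).clm_apply (differentiableAt_const _)

theorem pd_pd_eq_fderiv_fderiv (hu : ContDiffAt ℝ 2 u x) (i j : Fin m) :
    pd (pd u i) j x =
      fderiv ℝ (fderiv ℝ u) x (EuclideanSpace.single j 1) (EuclideanSpace.single i 1) := by
  change fderiv ℝ (fun y => fderiv ℝ u y (EuclideanSpace.single i 1)) x _ = _
  rw [fderiv_clm_apply (differentiableAt_fderiv_of_contDiffAt_two hu) (differentiableAt_const _)]
  simp

/-- The Hessian matrix of a function on Euclidean space, written with the iterated partial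
derivatives that occur in a nondivergence-form operator. -/
noncomputable def hessianMatrix (u : EuclideanSpace ℝ (Fin m) → ℝ)
    (x : EuclideanSpace ℝ (Fin m)) : Matrix (Fin m) (Fin m) ℝ :=
  Matrix.of fun i j => pd (pd u i) j x

theorem hessianMatrix_isHermitian (hu : ContDiffAt ℝ 2 u x) : (hessianMatrix u x).IsHermitian := by
  ext i j
  simp only [hessianMatrix, Matrix.conjTranspose_apply, Matrix.of_apply, star_trivial,
    pd_pd_eq_fderiv_fderiv hu]
  exact hu.isSymmSndFDerivAt (by simp) _ _

theorem hessianMatrix_eq_toMatrix (hu : ContDiffAt ℝ 2 u x) :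
    hessianMatrix u x =
      LinearMap.toMatrix (EuclideanSpace.basisFun (Fin m) ℝ).toBasis
        (EuclideanSpace.basisFun (Fin m) ℝ).toBasis (fderiv ℝ (∇ u) x).toLinearMap := by
  ext i j
  rw [hessianMatrix, Matrix.of_apply, pd_pd_eq_fderiv_fderiv hu,
    ← inner_fderiv_gradient]
  simp [LinearMap.toMatrix_apply, EuclideanSpace.inner_single_right]

theorem det_fderiv_gradient (hu : ContDiffAt ℝ 2 u x) :
    (fderiv ℝ (∇ u) x).det = (hessianMatrix u x).det := by
  rw [hessianMatrix_eq_toMatrix hu, LinearMap.det_toMatrix, ContinuousLinearMap.det]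

theorem dotProduct_hessianMatrix_mulVec (hu : ContDiffAt ℝ 2 u x) (ξ : Fin m → ℝ) :
    ξ ⬝ᵥ hessianMatrix u x *ᵥ ξ =
      fderiv ℝ (fderiv ℝ u) x (WithLp.toLp 2 ξ) (WithLp.toLp 2 ξ) := by
  have hξ : (WithLp.toLp 2 ξ : EuclideanSpace ℝ (Fin m)) =
      ∑ i, ξ i • EuclideanSpace.single i 1 := by
    ext k
    simp [Pi.single_apply]
  rw [hξ]
  simp only [map_sum, map_smul, FunLike.coe_sum, Finset.sum_apply, FunLike.coe_smul, Pi.smul_apply,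
    smul_eq_mul, dotProduct, Matrix.mulVec, hessianMatrix, Matrix.of_apply,
    pd_pd_eq_fderiv_fderiv hu, Finset.mul_sum]
  exact Finset.sum_congr rfl fun i _ => Finset.sum_congr rfl fun j _ => by ring

theorem posSemidef_neg_hessianMatrix_of_eventually_le_affine
    {ℓ : EuclideanSpace ℝ (Fin m) →L[ℝ] ℝ} (hu : ContDiffAt ℝ 2 u x)
    (hle : ∀ᶠ y in 𝓝 x, u y ≤ u x + ℓ (y - x)) : (-hessianMatrix u x).PosSemidef := by
  refine .of_dotProduct_mulVec_nonneg (hessianMatrix_isHermitian hu).neg fun ξ => ?_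
  rw [star_trivial, Matrix.neg_mulVec, dotProduct_neg, neg_nonneg,
    dotProduct_hessianMatrix_mulVec hu]
  exact fderiv_fderiv_apply_self_nonpos_of_eventually_le_affine hu hle _

end Hessian

section EllipticOperator

variable {m : ℕ} {a : EuclideanSpace ℝ (Fin m) → Fin m → Fin m → ℝ}
  {b : EuclideanSpace ℝ (Fin m) → Fin m → ℝ} {c : EuclideanSpace ℝ (Fin m) → ℝ}
  {u v : EuclideanSpace ℝ (Fin m) → ℝ} {x : EuclideanSpace ℝ (Fin m)}

/-- The second-order operator `L u = ∑ i j, a i j ∂ᵢ∂ⱼ u + ∑ i, b i ∂ᵢ u + c u` in nondivergence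
form. -/
noncomputable def ellipticOperator (a : EuclideanSpace ℝ (Fin m) → Fin m → Fin m → ℝ)
    (b : EuclideanSpace ℝ (Fin m) → Fin m → ℝ) (c u : EuclideanSpace ℝ (Fin m) → ℝ)
    (x : EuclideanSpace ℝ (Fin m)) : ℝ :=
  (∑ i, ∑ j, a x i j * pd (pd u i) j x) + (∑ i, b x i * pd u i x) + c x * u x

theorem pd_congr (h : u =ᶠ[𝓝 x] v) (i : Fin m) : pd u i =ᶠ[𝓝 x] pd v i :=
  h.fderiv.mono fun _ hy => congrArg (fun ℓ : _ →L[ℝ] ℝ => ℓ _) hy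

theorem ellipticOperator_congr (h : u =ᶠ[𝓝 x] v) :
    ellipticOperator a b c u x = ellipticOperator a b c v x := by
  simp only [ellipticOperator, h.eq_of_nhds, (pd_congr h _).eq_of_nhds,
    (pd_congr (pd_congr h _) _).eq_of_nhds]

theorem pd_sub_const_mul (hu : DifferentiableAt ℝ u x) (hv : DifferentiableAt ℝ v x) (t : ℝ)
    (i : Fin m) : pd (fun y => u y - t * v y) i x = pd u i x - t * pd v i x := by
  rw [pd, fderiv_fun_sub hu (hv.const_mul t), fderiv_const_mul hv]
  simp [pd]

theorem pd_pd_sub_const_mul (hu : ContDiffAt ℝ 2 u x) (hv : ContDiffAt ℝ 2 v x) (t : ℝ)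
    (i j : Fin m) :
    pd (pd (fun y => u y - t * v y) i) j x = pd (pd u i) j x - t * pd (pd v i) j x := by
  have h : pd (fun y => u y - t * v y) i =ᶠ[𝓝 x] fun y => pd u i y - t * pd v i y := by
    filter_upwards [hu.eventually (by simp), hv.eventually (by simp)] with y hu hv
    exact pd_sub_const_mul (hu.differentiableAt two_ne_zero) (hv.differentiableAt two_ne_zero) t i
  rw [(pd_congr h j).eq_of_nhds]
  exact pd_sub_const_mul (differentiableAt_pd hu i) (differentiableAt_pd hv i) t j

theorem ellipticOperator_sub_const_mul (hu : ContDiffAt ℝ 2 u x) (hv : ContDiffAt ℝ 2 v x)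
    (t : ℝ) :
    ellipticOperator a b c (fun y => u y - t * v y) x =
      ellipticOperator a b c u x - t * ellipticOperator a b c v x := by
  simp only [ellipticOperator, pd_pd_sub_const_mul hu hv,
    pd_sub_const_mul (hu.differentiableAt two_ne_zero) (hv.differentiableAt two_ne_zero), mul_sub,
    mul_left_comm _ t, Finset.sum_sub_distrib, ← Finset.mul_sum]
  ring

theorem ellipticOperator_le_of_posSemidef_neg_hessianMatrix {lam : ℝ}
    (ha : ∀ ξ : EuclideanSpace ℝ (Fin m), lam * ‖ξ‖ ^ 2 ≤ ∑ i, ∑ j, a x i j * ξ i * ξ j)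
    (hH : (-hessianMatrix u x).PosSemidef) :
    ellipticOperator a b c u x ≤
      lam * (hessianMatrix u x).trace + (∑ i, b x i * pd u i x) + c x * u x := by
  have h := mul_trace_le_sum_mul_of_posSemidef hH ha
  simp only [Matrix.trace_neg, Matrix.neg_apply, mul_neg, Finset.sum_neg_distrib, neg_le_neg_iff]
    at h
  exact add_le_add_left (add_le_add_left h _) _

theorem ellipticOperator_le_mul_of_isLocalMax
    (ha : ∀ ξ : EuclideanSpace ℝ (Fin m), 0 ≤ ∑ i, ∑ j, a x i j * ξ i * ξ j)
    (hu : ContDiffAt ℝ 2 u x) (hmax : IsLocalMax u x) :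
    ellipticOperator a b c u x ≤ c x * u x := by
  have hH : (-hessianMatrix u x).PosSemidef :=
    posSemidef_neg_hessianMatrix_of_eventually_le_affine (ℓ := 0) hu <|
      hmax.mono fun _ hy => by simpa using hy
  have hpd : ∀ i, pd u i x = 0 := fun i => by rw [pd, hmax.fderiv_eq_zero, zero_apply]
  have h := ellipticOperator_le_of_posSemidef_neg_hessianMatrix (b := b) (c := c) (lam := 0)
    (by simpa only [zero_mul] using ha) hH
  simpa only [hpd, mul_zero, Finset.sum_const_zero, zero_mul, add_zero, zero_add] using h

/-- Quantitative bounds on the coefficients of an elliptic operator on a set `U`: the ellipticity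
constant `lam`, a bound `B` for the drift coefficients, and an upper bound `C ≥ 0` for the
zeroth-order coefficient. Only the upper bound of `c` matters for maximum principles. -/
structure EllipticBoundsOn (a : EuclideanSpace ℝ (Fin m) → Fin m → Fin m → ℝ)
    (b : EuclideanSpace ℝ (Fin m) → Fin m → ℝ) (c : EuclideanSpace ℝ (Fin m) → ℝ)
    (U : Set (EuclideanSpace ℝ (Fin m))) (lam B C : ℝ) : Prop where
  lam_pos : 0 < lam
  potential_bound_nonneg : 0 ≤ C
  elliptic : ∀ x ∈ U, ∀ ξ : EuclideanSpace ℝ (Fin m),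
    lam * ‖ξ‖ ^ 2 ≤ ∑ i, ∑ j, a x i j * ξ i * ξ j
  abs_drift_le : ∀ x ∈ U, ∀ i, |b x i| ≤ B
  potential_le : ∀ x ∈ U, c x ≤ C

namespace EllipticBoundsOn

variable {U Q Ω : Set (EuclideanSpace ℝ (Fin m))} {lam B C : ℝ}

theorem mono (hL : EllipticBoundsOn a b c Ω lam B C) (hU : U ⊆ Ω) :
    EllipticBoundsOn a b c U lam B C where
  lam_pos := hL.lam_pos
  potential_bound_nonneg := hL.potential_bound_nonneg
  elliptic x hx := hL.elliptic x (hU hx)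
  abs_drift_le x hx := hL.abs_drift_le x (hU hx)
  potential_le x hx := hL.potential_le x (hU hx)

theorem sum_drift_mul_pd_le (hL : EllipticBoundsOn a b c U lam B C) (hx : x ∈ U) {r : ℝ}
    (hr : ‖∇ u x‖ ≤ r) : ∑ i, b x i * pd u i x ≤ m * B * r := by
  calc ∑ i, b x i * pd u i x ≤ ∑ _i : Fin m, B * r := by
        refine Finset.sum_le_sum fun i _ => (le_abs_self _).trans ?_
        have hpd : |pd u i x| ≤ r := by
          rw [pd_eq_gradient_apply]
          exact (PiLp.norm_apply_le (∇ u x) i).trans hr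
        rw [abs_mul]
        exact mul_le_mul (hL.abs_drift_le x hx i) hpd (abs_nonneg _)
          ((abs_nonneg _).trans (hL.abs_drift_le x hx i))
    _ = m * B * r := by simp [mul_assoc]

theorem abs_det_hessianMatrix_le (hL : EllipticBoundsOn a b c U lam B C) (hx : x ∈ U)
    (hH : (-hessianMatrix u x).PosSemidef) (hLu : 0 ≤ ellipticOperator a b c u x) {M r : ℝ}
    (hu : 0 ≤ u x) (hM : u x ≤ M) (hr : ‖∇ u x‖ ≤ r) :
    |(hessianMatrix u x).det| ≤ ((m * B * r + C * M) / lam) ^ m := by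
  have htrace : (-hessianMatrix u x).trace ≤ (m * B * r + C * M) / lam := by
    have hLu' := hLu.trans
      (ellipticOperator_le_of_posSemidef_neg_hessianMatrix (hL.elliptic x hx) hH)
    have hpotential : c x * u x ≤ C * M :=
      mul_le_mul (hL.potential_le x hx) hM hu hL.potential_bound_nonneg
    rw [Matrix.trace_neg, le_div_iff₀ hL.lam_pos]
    linarith [hL.sum_drift_mul_pd_le hx hr]
  calc |(hessianMatrix u x).det| ≤ (-hessianMatrix u x).trace ^ m := by
        simpa only [Fintype.card_fin] using abs_det_le_trace_neg_pow_of_posSemidef_neg hH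
    _ ≤ ((m * B * r + C * M) / lam) ^ m := pow_le_pow_left₀ hH.trace_nonneg htrace m

theorem nonpos_of_volume_small (hL : EllipticBoundsOn a b c U lam B C) (hQ : IsCompact Q)
    (hU : IsOpen U) (hUQ : U ⊆ Q) {d : ℝ} (hd : 0 < d) (hdiam : ∀ x ∈ Q, ∀ y ∈ Q, dist x y ≤ d)
    (hsmall : ENNReal.ofReal (((m * B + C * d) / lam) ^ m) * volume U
      < volume (Metric.ball (0 : EuclideanSpace ℝ (Fin m)) 1))
    (huU : ContDiffOn ℝ 2 u U) (huQ : UpperSemicontinuousOn u Q) (hbd : ∀ x ∈ Q \ U, u x ≤ 0)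
    (hLu : ∀ x ∈ U, 0 ≤ ellipticOperator a b c u x) : ∀ x ∈ Q, u x ≤ 0 := by
  by_contra! ⟨x₁, hx₁, hux₁⟩
  obtain ⟨x₀, hx₀, hmax⟩ := UpperSemicontinuousOn.exists_isMaxOn ⟨x₁, hx₁⟩ hQ huQ
  set r := u x₀ / d
  have hrpos : 0 < r := div_pos (hux₁.trans_le (hmax hx₁)) hd
  have hrd : u x₀ = r * d := (div_mul_cancel₀ _ hd.ne').symm
  have hu2 : ∀ x ∈ U, ContDiffAt ℝ 2 u x := fun x hx => huU.contDiffAt (hU.mem_nhds hx)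
  have hcover := ball_subset_gradient_image_upperContactSet hQ hU hUQ hd hdiam huQ
    (fun x hx => (hu2 x hx).differentiableAt two_ne_zero) hbd hx₀
  have hdet : ∀ x ∈ {x ∈ U | x ∈ upperContactSet u Q ∧ 0 < u x ∧ ‖∇ u x‖ < r},
      |(fderiv ℝ (∇ u) x).det| ≤ r ^ m * ((m * B + C * d) / lam) ^ m := by
    rintro x ⟨hxU, ⟨hxQ, htangent⟩, hux, hgrad⟩
    have hH := posSemidef_neg_hessianMatrix_of_eventually_le_affine (hu2 x hxU)
      (Filter.mem_of_superset (hU.mem_nhds hxU) fun y hy => htangent y (hUQ hy))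
    rw [det_fderiv_gradient (hu2 x hxU)]
    refine (hL.abs_det_hessianMatrix_le hxU hH (hLu x hxU) hux.le (hmax hxQ) hgrad.le).trans_eq ?_
    rw [hrd, ← mul_pow]
    ring
  have hvol : ENNReal.ofReal (r ^ m) * volume (Metric.ball (0 : EuclideanSpace ℝ (Fin m)) 1) ≤
      ENNReal.ofReal (r ^ m) * (ENNReal.ofReal (((m * B + C * d) / lam) ^ m) * volume U) := by
    calc _ = volume (Metric.ball (0 : EuclideanSpace ℝ (Fin m)) r) := by
          rw [Measure.addHaar_ball_of_pos volume _ hrpos, finrank_euclideanSpace_fin]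
      _ ≤ ENNReal.ofReal (r ^ m * ((m * B + C * d) / lam) ^ m) * volume U :=
          (measure_mono hcover).trans <| addHaar_image_le_of_abs_det_fderiv_le volume
            hU.measurableSet (sep_subset _ _) (fun x hx => differentiableAt_gradient (hu2 x hx))
            hdet
      _ = _ := by rw [ENNReal.ofReal_mul (by positivity), mul_assoc]
  have hrm : ENNReal.ofReal (r ^ m) ≠ 0 := by simpa using pow_pos hrpos m
  exact hsmall.not_ge ((ENNReal.mul_le_mul_iff_right hrm ENNReal.ofReal_ne_top).1 hvol)

theorem exists_isCompact_forall_nonpos (hL : EllipticBoundsOn a b c Ω lam B C) (hΩo : IsOpen Ω)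
    (hΩb : Bornology.IsBounded Ω) :
    ∃ K ⊆ Ω, IsCompact K ∧ ∀ z : EuclideanSpace ℝ (Fin m) → ℝ, ContDiffOn ℝ 2 z Ω →
      UpperSemicontinuousOn z (closure Ω) → (∀ x ∈ Ω, 0 ≤ ellipticOperator a b c z x) →
      (∀ x ∈ frontier Ω, z x ≤ 0) → (∀ x ∈ K, z x ≤ 0) → ∀ x ∈ Ω, z x ≤ 0 := by
  have hQ : IsCompact (closure Ω) := hΩb.isCompact_closure
  set d := Metric.diam (closure Ω) + 1
  have hd : 0 < d := by positivity
  have hdiam : ∀ x ∈ closure Ω, ∀ y ∈ closure Ω, dist x y ≤ d := fun x hx y hy =>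
    (Metric.dist_le_diam_of_mem hQ.isBounded hx hy).trans (le_add_of_nonneg_right zero_le_one)
  obtain ⟨K, hKΩ, hK, hKvol⟩ := hΩo.measurableSet.exists_isCompact_sdiff_lt
    (μ := volume) hΩb.measure_lt_top.ne
    (ε := volume (Metric.ball (0 : EuclideanSpace ℝ (Fin m)) 1)
      / ENNReal.ofReal (((m * B + C * d) / lam) ^ m))
    (ENNReal.div_ne_zero.2 ⟨(Metric.measure_ball_pos _ _ one_pos).ne', ENNReal.ofReal_ne_top⟩)
  refine ⟨K, hKΩ, hK, fun z hz2 hzc hLz hzfrontier hzK x hx => ?_⟩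
  have hsub : Ω \ K ⊆ Ω := sdiff_subset
  refine (hL.mono hsub).nonpos_of_volume_small hQ (hΩo.sdiff hK.isClosed)
    (hsub.trans subset_closure) hd hdiam (ENNReal.mul_lt_of_lt_div' hKvol) (hz2.mono hsub) hzc
    ?_ (fun y hy => hLz y (hsub hy)) x (subset_closure hx)
  rintro y ⟨hyc, hy⟩
  by_cases hyK : y ∈ K
  · exact hzK y hyK
  · exact hzfrontier y (hΩo.frontier_eq ▸ ⟨hyc, fun hyΩ => hy ⟨hyΩ, hyK⟩⟩)

theorem nonpos_of_lowerSemicontinuousOn_supersolution (hL : EllipticBoundsOn a b c Ω lam B C)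
    (hΩo : IsOpen Ω) (hΩb : Bornology.IsBounded Ω) {ψ w : EuclideanSpace ℝ (Fin m) → ℝ}
    (hψ2 : ContDiffOn ℝ 2 ψ Ω) (hψc : LowerSemicontinuousOn ψ (closure Ω))
    (hψpos : ∀ x ∈ Ω, 0 < ψ x) (hψbd : ∀ x ∈ frontier Ω, 0 ≤ ψ x)
    (hLψ : ∀ x ∈ Ω, ellipticOperator a b c ψ x < 0)
    (hw2 : ContDiffOn ℝ 2 w Ω) (hwc : UpperSemicontinuousOn w (closure Ω))
    (hLw : ∀ x ∈ Ω, 0 ≤ ellipticOperator a b c w x) (hwbd : ∀ x ∈ frontier Ω, w x ≤ 0) :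
    ∀ x ∈ Ω, w x ≤ 0 := by
  obtain ⟨K, hKΩ, hK, hmaxPrinciple⟩ := hL.exists_isCompact_forall_nonpos hΩo hΩb
  refine hmaxPrinciple w hw2 hwc hLw hwbd ?_
  by_contra! ⟨y, hyK, hwy⟩
  obtain ⟨x, hxK, hxmax⟩ := hK.exists_isMaxOn ⟨y, hyK⟩
    ((hw2.continuousOn.mono hKΩ).div (hψ2.continuousOn.mono hKΩ)
      fun x hx => (hψpos x (hKΩ hx)).ne')
  have hxΩ := hKΩ hxK
  set t := w x / ψ x with ht
  have htpos : 0 < t := (div_pos hwy (hψpos y (hKΩ hyK))).trans_le (hxmax hyK)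
  set z : EuclideanSpace ℝ (Fin m) → ℝ := fun v => w v - t * ψ v
  have hz2 : ContDiffOn ℝ 2 z Ω := hw2.sub (contDiffOn_const.mul hψ2)
  have hzc : UpperSemicontinuousOn z (closure Ω) :=
    upperSemicontinuousOn_sub_const_mul hwc hψc htpos.le
  have hLz : ∀ v ∈ Ω, 0 < ellipticOperator a b c z v := fun v hv => by
    rw [ellipticOperator_sub_const_mul (hw2.contDiffAt (hΩo.mem_nhds hv))
      (hψ2.contDiffAt (hΩo.mem_nhds hv))]
    linarith [hLw v hv, mul_neg_of_pos_of_neg htpos (hLψ v hv)]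
  have hzbd : ∀ v ∈ frontier Ω, z v ≤ 0 := fun v hv =>
    (sub_le_self _ (mul_nonneg htpos.le (hψbd v hv))).trans (hwbd v hv)
  have hzK : ∀ v ∈ K, z v ≤ 0 := fun v hv =>
    sub_nonpos.2 ((div_le_iff₀ (hψpos v (hKΩ hv))).1 (hxmax hv))
  have hzx : z x = 0 := by
    simp only [z, ht, div_mul_cancel₀ _ (hψpos x hxΩ).ne', sub_self]
  have hzmax : IsLocalMax z x := by
    filter_upwards [hΩo.mem_nhds hxΩ] with v hv
    exact hzx ▸ hmaxPrinciple z hz2 hzc (fun v hv => (hLz v hv).le) hzbd hzK v hv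
  have hLzx : ellipticOperator a b c z x ≤ c x * z x :=
    ellipticOperator_le_mul_of_isLocalMax
      (fun ξ => (mul_nonneg hL.lam_pos.le (sq_nonneg _)).trans (hL.elliptic x hxΩ ξ))
      (hz2.contDiffAt (hΩo.mem_nhds hxΩ)) hzmax
  rw [hzx, mul_zero] at hLzx
  exact hLzx.not_gt (hLz x hxΩ)

end EllipticBoundsOn

end EllipticOperator

theorem statement18_general {n : ℕ} {Ω : Set (EuclideanSpace ℝ (Fin n))} (hΩo : IsOpen Ω)
    (hΩb : Bornology.IsBounded Ω) {a : EuclideanSpace ℝ (Fin n) → Fin n → Fin n → ℝ}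
    {b : EuclideanSpace ℝ (Fin n) → Fin n → ℝ} {c : EuclideanSpace ℝ (Fin n) → ℝ}
    (hb : ∃ B : ℝ, ∀ x ∈ Ω, ∀ i, |b x i| ≤ B) (hc : ∃ C : ℝ, ∀ x ∈ Ω, c x ≤ C)
    (ha : ∃ lam > (0 : ℝ), ∀ x ∈ Ω, ∀ ξ : EuclideanSpace ℝ (Fin n),
      lam * ‖ξ‖ ^ 2 ≤ ∑ i, ∑ j, a x i j * ξ i * ξ j)
    {ψ w : EuclideanSpace ℝ (Fin n) → ℝ}
    (hψ2 : ContDiffOn ℝ 2 ψ Ω) (hψpos : ∀ x ∈ Ω, 0 < ψ x)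
    (hLψ : ∀ x ∈ Ω, ellipticOperator a b c ψ x < 0)
    (hw2 : ContDiffOn ℝ 2 w Ω) (hwc : UpperSemicontinuousOn w (closure Ω))
    (hLw : ∀ x ∈ Ω, 0 ≤ ellipticOperator a b c w x) (hwbd : ∀ x ∈ frontier Ω, w x ≤ 0) :
    ∀ x ∈ Ω, w x ≤ 0 := by
  obtain ⟨B, hB⟩ := hb
  obtain ⟨C, hC⟩ := hc
  obtain ⟨lam, hlam, hell⟩ := ha
  have hL : EllipticBoundsOn a b c Ω lam B (max C 0) :=
    ⟨hlam, le_max_right _ _, hell, hB, fun x hx => (hC x hx).trans (le_max_left _ _)⟩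
  -- Extending `ψ` by zero makes it lower semicontinuous, whatever its behaviour at the boundary.
  have heq : EqOn (Ω.indicator ψ) ψ Ω := eqOn_indicator
  have hnonneg : ∀ x ∈ Ω, 0 ≤ ψ x := fun x hx => (hψpos x hx).le
  refine hL.nonpos_of_lowerSemicontinuousOn_supersolution hΩo hΩb (ψ := Ω.indicator ψ)
    (hψ2.congr heq)
    ((lowerSemicontinuous_indicator_of_continuousOn hΩo hψ2.continuousOn
      hnonneg).lowerSemicontinuousOn _)
    (fun x hx => (heq hx).symm ▸ hψpos x hx) (fun x _ => indicator_nonneg hnonneg x)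
    (fun x hx => ?_) hw2 hwc hLw hwbd
  rw [ellipticOperator_congr (heq.eventuallyEq_of_mem (hΩo.mem_nhds hx))]
  exact hLψ x hx

/-- **Sufficiency direction of the Berestycki–Varadhan maximum principle.** Let `Ω ⊂ ℝ^n` be a
bounded domain and `L` a uniformly elliptic operator with symmetric continuous second-order
coefficients and bounded lower-order coefficients.  Suppose the first eigenvalue of `L` in `Ω`
is positive, witnessed by `μ > 0` and `ψ ∈ C²(Ω) ∩ C(closure Ω)` with `ψ > 0` in `Ω` and
`(L + μ)ψ ≤ 0` in `Ω`.  Then the maximum principle holds in `Ω`: every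
`w ∈ C²(Ω) ∩ C(closure Ω)` with `Lw ≥ 0` in `Ω` and `w ≤ 0` on `∂Ω` satisfies `w ≤ 0` in `Ω`. -/
theorem statement18 (n : ℕ)
    (Ω : Set (EuclideanSpace ℝ (Fin n)))
    (hΩo : IsOpen Ω) (hΩc : IsConnected Ω) (hΩb : Bornology.IsBounded Ω)
    (a : EuclideanSpace ℝ (Fin n) → Fin n → Fin n → ℝ)
    (b : EuclideanSpace ℝ (Fin n) → Fin n → ℝ)
    (c : EuclideanSpace ℝ (Fin n) → ℝ)
    (hasym : ∀ x i j, a x i j = a x j i)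
    (hacont : ∀ i j, ContinuousOn (fun x => a x i j) (closure Ω))
    (hbbd : ∃ M : ℝ, ∀ x ∈ Ω, ∀ i, |b x i| ≤ M)
    (hcbd : ∃ M : ℝ, ∀ x ∈ Ω, |c x| ≤ M)
    (hell : ∃ lam > (0 : ℝ), ∀ x ∈ Ω, ∀ ξ : EuclideanSpace ℝ (Fin n),
        lam * ‖ξ‖ ^ 2 ≤ ∑ i, ∑ j, a x i j * ξ i * ξ j)
    (mu : ℝ) (hmu : 0 < mu)
    (ψ : EuclideanSpace ℝ (Fin n) → ℝ)
    (hψ2 : ContDiffOn ℝ 2 ψ Ω) (hψc : ContinuousOn ψ (closure Ω))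
    (hψpos : ∀ x ∈ Ω, 0 < ψ x)
    (hψsup : ∀ x ∈ Ω,
        (∑ i, ∑ j, a x i j * pd (pd ψ i) j x) + (∑ i, b x i * pd ψ i x) + c x * ψ x
          + mu * ψ x ≤ 0)
    (w : EuclideanSpace ℝ (Fin n) → ℝ)
    (hw2 : ContDiffOn ℝ 2 w Ω) (hwc : ContinuousOn w (closure Ω))
    (hLw : ∀ x ∈ Ω,
        0 ≤ (∑ i, ∑ j, a x i j * pd (pd w i) j x) + (∑ i, b x i * pd w i x) + c x * w x)
    (hwbd : ∀ x ∈ frontier Ω, w x ≤ 0) :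
    ∀ x ∈ Ω, w x ≤ 0 := by
  exact statement18_general hΩo hΩb hbbd
    (hcbd.imp fun _ hM x hx => (le_abs_self _).trans (hM x hx)) hell hψ2 hψpos
    (fun x hx => (lt_add_of_pos_right _ (mul_pos hmu (hψpos x hx))).trans_le (hψsup x hx))
    hw2 hwc.upperSemicontinuousOn hLw hwbd
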